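/- arXiv:2605.22746 — 3 statements merged into one kernel-verified Lean document; each statement's English description precedes it below -/
import Mathlib

section
/- Let α ∈ ℝ_{>0}^K, let π be a Dirichlet(α)-distributed random vector, and set p = α/α₀. Then 𝔼[‖π − p‖₂³] ≤ 2(1 − ‖p‖₂²) / (α₀ + 1). -/
open MeasureTheory ProbabilityTheory

lemma aux_meas (a r : ℝ) : Measurable (gammaPDF a r) :=
  (measurable_gammaPDFReal a r).ennreal_ofReal

lemma aux_gamma (a t : ℝ) (ha : 0 < a) (ht : 0 < t) (k : ℕ) :
    ∫⁻ x, ENNReal.ofReal (x ^ k * Real.exp (-(t * x))) ∂(gammaMeasure a 1)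
      = ENNReal.ofReal (Real.Gamma (a + k) / Real.Gamma a * (1 + t) ^ (-(a + k))) := by
  have hk : (0 : ℝ) ≤ k := Nat.cast_nonneg k
  have hak : 0 < a + k := by linarith
  have h1t : 0 < 1 + t := by linarith
  have hG1 := Real.Gamma_pos_of_pos ha
  have hG2 := Real.Gamma_pos_of_pos hak
  have hm : Measurable (gammaPDF a 1) := (measurable_gammaPDFReal a 1).ennreal_ofReal
  rw [gammaMeasure, lintegral_withDensity_eq_lintegral_mul _ hm (by fun_prop)]
  have key : ∀ x, (gammaPDF a 1 * fun x => ENNReal.ofReal (x ^ k * Real.exp (-(t * x)))) x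
      = ENNReal.ofReal (Real.Gamma (a + k) / Real.Gamma a * (1 + t) ^ (-(a + k)))
        * gammaPDF (a + k) (1 + t) x := by
    intro x
    simp only [Pi.mul_apply]
    rcases lt_or_ge x 0 with hx | hx
    · simp [gammaPDF_of_neg hx]
    · rw [gammaPDF_of_nonneg hx, gammaPDF_of_nonneg hx, ← ENNReal.ofReal_mul (by positivity),
        ← ENNReal.ofReal_mul (by positivity)]
      congr 1
      have e1 : Real.exp (-((1 + t) * x)) = Real.exp (-(1 * x)) * Real.exp (-(t * x)) := by
        rw [← Real.exp_add]; congr 1; ring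
      have e2 : (1 + t) ^ (-(a + k)) * (1 + t) ^ (a + k) = 1 := by
        rw [← Real.rpow_add h1t]; simp
      have e3 : x ^ (a + k - 1) = x ^ (a - 1) * x ^ k := by
        rcases hx.eq_or_lt with h0 | h0
        · rcases Nat.eq_zero_or_pos k with hk0 | hk0
          · simp [hk0]
          · have : (1 : ℝ) ≤ k := by exact_mod_cast hk0
            rw [← h0, Real.zero_rpow (by linarith), zero_pow (by omega), mul_zero]
        · rw [← Real.rpow_natCast, ← Real.rpow_add h0]; congr 1; ring
      rw [e1, e3, Real.one_rpow]
      have : Real.Gamma (a + k) / Real.Gamma a * (1 + t) ^ (-(a + k)) *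
          ((1 + t) ^ (a + k) / Real.Gamma (a + k) * (x ^ (a - 1) * x ^ k) *
          (Real.exp (-(1 * x)) * Real.exp (-(t * x))))
          = ((1 + t) ^ (-(a + k)) * (1 + t) ^ (a + k)) * (Real.Gamma (a + k) / Real.Gamma (a + k))
           * (1 / Real.Gamma a * (x ^ (a - 1) * x ^ k) *
          (Real.exp (-(1 * x)) * Real.exp (-(t * x)))) := by ring
      rw [this, e2, div_self hG2.ne']
      ring
  rw [lintegral_congr key, lintegral_const_mul _ (aux_meas _ _),
    lintegral_gammaPDF_eq_one hak h1t, mul_one]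

lemma aux_inv (m : ℕ) (s : ℝ) (hs : 0 < s) :
    ∫⁻ t in Set.Ioi (0 : ℝ), ENNReal.ofReal (t ^ m / m.factorial * Real.exp (-(s * t)))
      = ENNReal.ofReal ((1 / s) ^ (m + 1)) := by
  have h := lintegral_gammaPDF_eq_one (a := m + 1) (r := s) (by positivity) hs
  have h2 : ∫⁻ x, gammaPDF (m + 1) s x = ∫⁻ x in Set.Ioi (0:ℝ), gammaPDF (m + 1) s x := by
    rw [← setLIntegral_congr (Ioi_ae_eq_Ici (a := (0:ℝ)).symm)]
    symm
    apply setLIntegral_eq_of_support_subset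
    intro x hx
    by_contra hx'
    exact hx (gammaPDF_of_neg (by simpa using hx'))
  rw [h2] at h
  have h3 : ∀ x ∈ Set.Ioi (0:ℝ), ENNReal.ofReal (x ^ m / m.factorial * Real.exp (-(s * x)))
      = ENNReal.ofReal ((1 / s) ^ (m + 1)) * gammaPDF (m + 1) s x := by
    intro x hx
    have hx : 0 < x := hx
    rw [gammaPDF_of_nonneg hx.le, ← ENNReal.ofReal_mul (by positivity)]
    congr 1
    rw [Real.Gamma_nat_eq_factorial, add_sub_cancel_right, Real.rpow_natCast]
    have : s ^ ((m : ℝ) + 1) = s ^ (m + 1) := by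
      rw [← Real.rpow_natCast]; push_cast; rfl
    rw [this, one_div, inv_pow]
    field_simp
  rw [setLIntegral_congr_fun measurableSet_Ioi h3,
    lintegral_const_mul _ (aux_meas _ _), h, mul_one]

lemma aux_moment {K : ℕ} {Ω : Type*} [MeasurableSpace Ω] (μ : Measure Ω) [IsProbabilityMeasure μ]
    (α : Fin K → ℝ) (hα : ∀ i, 0 < α i)
    (G : Fin K → Ω → ℝ) (hGmeas : ∀ i, Measurable (G i))
    (hGindep : iIndepFun G μ)
    (hGlaw : ∀ i, μ.map (G i) = gammaMeasure (α i) 1)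
    (hpos : ∀ᵐ ω ∂μ, ∀ i, 0 < G i ω) (i : Fin K) (m : ℕ) :
    ∫⁻ ω, ENNReal.ofReal ((G i ω / ∑ j, G j ω) ^ (m + 1)) ∂μ
      = ∫⁻ t in Set.Ioi (0 : ℝ), ENNReal.ofReal (t ^ m / m.factorial *
        (Real.Gamma (α i + (m + 1 : ℕ)) / Real.Gamma (α i)
          * (1 + t) ^ (-((∑ j, α j) + (m + 1 : ℕ))))) := by
  set e : Fin K → ℕ := fun j => if j = i then m + 1 else 0 with he
  set F : ℝ → Fin K → ℝ → ℝ := fun t j x => x ^ (e j) * Real.exp (-(t * x)) with hF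
  have h1 : ∫⁻ ω, ENNReal.ofReal ((G i ω / ∑ j, G j ω) ^ (m + 1)) ∂μ
      = ∫⁻ ω, (∫⁻ t in Set.Ioi (0 : ℝ), ENNReal.ofReal (t ^ m / m.factorial *
          (G i ω ^ (m + 1) * Real.exp (-(t * ∑ j, G j ω))))) ∂μ := by
    apply lintegral_congr_ae
    filter_upwards [hpos] with ω hω
    have hS : 0 < ∑ j, G j ω := Finset.sum_pos (fun j _ => hω j) ⟨i, Finset.mem_univ i⟩
    have hi := hω i
    rw [div_eq_mul_one_div, mul_pow, ENNReal.ofReal_mul (by positivity), ← aux_inv m _ hS,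
      ← lintegral_const_mul _ (by fun_prop)]
    apply lintegral_congr
    intro t
    rw [← ENNReal.ofReal_mul (by positivity)]
    congr 1
    rw [mul_comm t]; ring
  rw [h1, lintegral_lintegral_swap (by fun_prop)]
  apply setLIntegral_congr_fun measurableSet_Ioi
  intro t ht
  have ht : 0 < t := ht
  have h1t : 0 < 1 + t := by linarith
  have h2 : ∫⁻ ω, ENNReal.ofReal (t ^ m / m.factorial *
          (G i ω ^ (m + 1) * Real.exp (-(t * ∑ j, G j ω)))) ∂μ
      = ENNReal.ofReal (t ^ m / m.factorial) *
         ∫⁻ ω, ∏ j, ENNReal.ofReal (F t j (G j ω)) ∂μ := by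
    rw [← lintegral_const_mul _ (by fun_prop)]
    apply lintegral_congr_ae
    filter_upwards [hpos] with ω hω
    rw [ENNReal.ofReal_mul (by positivity), ← ENNReal.ofReal_prod_of_nonneg]
    · congr 2
      simp only [hF, Finset.prod_mul_distrib, ← Real.exp_sum, he]
      congr 1
      · rw [Finset.prod_eq_single i] <;> simp +contextual
      · rw [Finset.mul_sum, Finset.sum_neg_distrib]
    · intro j _
      have := hω j
      positivity
  have hFm : ∀ j, Measurable (fun x => ENNReal.ofReal (F t j x)) := by
    intro j; simp only [hF]; fun_prop
  have hind : iIndepFun (fun j ω => ENNReal.ofReal (F t j (G j ω))) μ :=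
    hGindep.comp (fun j x => ENNReal.ofReal (F t j x)) hFm
  have h3 : ∫⁻ ω, ∏ j, ENNReal.ofReal (F t j (G j ω)) ∂μ
      = ∏ j, ∫⁻ ω, ENNReal.ofReal (F t j (G j ω)) ∂μ :=
    lintegral_prod_eq_prod_lintegral_of_indepFun Finset.univ _ hind
      (fun j => (hFm j).comp (hGmeas j))
  have h4 : ∀ j, ∫⁻ ω, ENNReal.ofReal (F t j (G j ω)) ∂μ
      = ENNReal.ofReal (Real.Gamma (α j + e j) / Real.Gamma (α j) * (1 + t) ^ (-(α j + e j))) := by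
    intro j
    rw [← aux_gamma (α j) t (hα j) ht (e j), ← hGlaw j, lintegral_map (hFm j) (hGmeas j)]
  have hGp : ∀ j, 0 < Real.Gamma (α j) := fun j => Real.Gamma_pos_of_pos (hα j)
  have hGp' : ∀ j, 0 < Real.Gamma (α j + e j) := fun j =>
    Real.Gamma_pos_of_pos (by have := hα j; positivity)
  simp only
  rw [h2, h3, Finset.prod_congr rfl (fun j _ => h4 j), ← ENNReal.ofReal_prod_of_nonneg,
    ← ENNReal.ofReal_mul (by positivity)]
  · congr 2
    rw [Finset.prod_mul_distrib]
    congr 1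
    · rw [Finset.prod_eq_single i]
      · simp [he]
      · intro j _ hj
        simp [he, hj, (hGp j).ne']
      · simp
    · rw [← Real.rpow_sum_of_pos h1t]
      congr 1
      rw [Finset.sum_neg_distrib, Finset.sum_add_distrib]
      congr 2
      simp [he]
  · intro j _
    have := hGp j
    have := hGp' j
    positivity

lemma aux_int (a : ℝ) (ha : 0 < a) :
    IntegrableOn (fun t : ℝ => (1 + t) ^ (-(a + 1))) (Set.Ioi 0) ∧
    ∫ t in Set.Ioi (0 : ℝ), (1 + t) ^ (-(a + 1)) = 1 / a := by
  have h := integrableOn_add_rpow_Ioi_of_lt (a := -(a+1)) (c := 0) (m := 1) (by linarith)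
    (by norm_num)
  refine ⟨by simpa [add_comm] using h, ?_⟩
  have := integral_Ioi_of_hasDerivAt_of_tendsto' (a := (0:ℝ)) (m := 0)
    (f := fun t : ℝ => -((t + 1) ^ (-a) / a)) (f' := fun t => (t + 1) ^ (-(a + 1))) ?_ h ?_
  · simp only [add_comm (1:ℝ) _]
    rw [this]; simp
  · intro x hx
    have hx : 0 ≤ x := hx
    have := ((((hasDerivAt_id x).add_const 1).rpow_const (p := -a)
      (Or.inl (by simp only [id]; positivity))).div_const a).neg
    convert! this using 1
    simp only [id]
    rw [show -a - 1 = -(a+1) by ring]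
    field_simp
  · have h1 : Filter.Tendsto (fun t : ℝ => (t + 1) ^ (-a)) Filter.atTop (nhds 0) :=
      (tendsto_rpow_neg_atTop ha).comp (Filter.tendsto_atTop_add_const_right _ _ Filter.tendsto_id)
    simpa using (h1.div_const a).neg

lemma aux_beta0 (a : ℝ) (ha : 0 < a) (c : ℝ) (hc : 0 ≤ c) :
    ∫⁻ t in Set.Ioi (0 : ℝ), ENNReal.ofReal (t ^ 0 / (Nat.factorial 0) *
        (c * (1 + t) ^ (-(a + (0 + 1 : ℕ))))) = ENNReal.ofReal (c / a) := by
  obtain ⟨h1, h2⟩ := aux_int a ha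
  have := ofReal_integral_eq_lintegral_ofReal (h1.const_mul c) (by
    filter_upwards [ae_restrict_mem measurableSet_Ioi] with t ht
    have : (0:ℝ) < t := ht
    positivity)
  rw [integral_const_mul, h2] at this
  rw [div_eq_mul_one_div, this]
  simp

lemma aux_beta1 (a : ℝ) (ha : 0 < a) (c : ℝ) (hc : 0 ≤ c) :
    ∫⁻ t in Set.Ioi (0 : ℝ), ENNReal.ofReal (t ^ 1 / (Nat.factorial 1) *
        (c * (1 + t) ^ (-(a + (1 + 1 : ℕ))))) = ENNReal.ofReal (c / (a * (a + 1))) := by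
  obtain ⟨h1, h2⟩ := aux_int a ha
  obtain ⟨h3, h4⟩ := aux_int (a + 1) (by linarith)
  have hh : ∀ t ∈ Set.Ioi (0:ℝ), t ^ 1 / (Nat.factorial 1) *
        (c * (1 + t) ^ (-(a + (1 + 1 : ℕ))))
        = c * ((1 + t) ^ (-(a + 1)) - (1 + t) ^ (-(a + 1 + 1))) := by
    intro t ht
    have ht : 0 < t := ht
    have : (1 + t) ^ (-(a + 1)) = (1 + t) ^ (-(a + 1 + 1)) * (1 + t) := by
      rw [← Real.rpow_add_one (by positivity)]; congr 1; ring
    rw [this, show -(a + ((1 + 1 : ℕ) : ℝ)) = -(a + 1 + 1) by push_cast; ring]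
    simp
    ring
  have := ofReal_integral_eq_lintegral_ofReal ((h1.sub h3).const_mul c) (by
    filter_upwards [ae_restrict_mem measurableSet_Ioi] with t ht
    have h0 : (0:ℝ) < t := ht
    simp only [Pi.sub_apply, Pi.zero_apply]
    rw [← hh t ht]
    positivity)
  simp only [Pi.sub_apply] at this
  rw [integral_const_mul, integral_sub h1 h3, h2, h4] at this
  rw [setLIntegral_congr_fun measurableSet_Ioi (fun t ht => by rw [hh t ht]), ← this]
  congr 1
  field_simp
  ring

/-- **Dirichlet third-moment bound.**
Let `π` be a Dirichlet(α)-distributed random vector, realized as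
`π_i = G_i / (G_1 + ⋯ + G_K)` where the `G_i` are independent Gamma(α_i, 1)
random variables, and let `p = α/α₀`.  Then
`𝔼[‖π − p‖₂³] ≤ 2(1 − ‖p‖₂²)/(α₀ + 1)`. -/
theorem dirichlet_expected_cubed_dist_le {K : ℕ} (hK : 0 < K)
    {Ω : Type*} [MeasurableSpace Ω] (μ : Measure Ω) [IsProbabilityMeasure μ]
    (α : Fin K → ℝ) (hα : ∀ i, 0 < α i)
    (G : Fin K → Ω → ℝ) (hGmeas : ∀ i, Measurable (G i))
    (hGindep : iIndepFun G μ)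
    (hGlaw : ∀ i, μ.map (G i) = gammaMeasure (α i) 1)
    (π : Ω → EuclideanSpace ℝ (Fin K))
    (hπ : ∀ ω i, π ω i = G i ω / ∑ j, G j ω)
    (α₀ : ℝ) (hα₀ : α₀ = ∑ j, α j)
    (p : EuclideanSpace ℝ (Fin K)) (hp : ∀ i, p i = α i / α₀) :
    ∫ ω, ‖π ω - p‖ ^ 3 ∂μ ≤ 2 * (1 - ‖p‖ ^ 2) / (α₀ + 1) := by

  have hα₀pos : 0 < α₀ := by
    rw [hα₀]; exact Finset.sum_pos (fun j _ => hα j) ⟨⟨0, hK⟩, Finset.mem_univ _⟩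
  have hpos : ∀ᵐ ω ∂μ, ∀ i, 0 < G i ω := by
    rw [ae_all_iff]
    intro i
    have h0 : ∀ᵐ x ∂(gammaMeasure (α i) 1), 0 < x := by
      rw [gammaMeasure,
        ae_withDensity_iff (aux_meas _ _)]
      have : ∀ᵐ x : ℝ, x ≠ 0 := by simp [ae_iff]
      filter_upwards [this] with x hx hne
      by_contra hlt
      exact hne (gammaPDF_of_neg (lt_of_le_of_ne (not_lt.mp hlt) hx))
    rw [← hGlaw i] at h0
    exact ae_of_ae_map (hGmeas i).aemeasurable h0
  set Q : Fin K → Ω → ℝ := fun i ω => G i ω / ∑ j, G j ω with hQ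
  have hQm : ∀ i, Measurable (Q i) := by
    intro i; simp only [hQ]; fun_prop
  have hQ01 : ∀ᵐ ω ∂μ, (∀ i, 0 ≤ Q i ω ∧ Q i ω ≤ 1) ∧ ∑ i, Q i ω = 1 := by
    filter_upwards [hpos] with ω hω
    have hS : 0 < ∑ j, G j ω := Finset.sum_pos (fun j _ => hω j) ⟨⟨0, hK⟩, Finset.mem_univ _⟩
    refine ⟨fun i => ⟨div_nonneg (hω i).le hS.le, ?_⟩, ?_⟩
    · rw [div_le_one hS]
      exact Finset.single_le_sum (f := fun j => G j ω) (fun j _ => (hω j).le) (Finset.mem_univ i)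
    · simp only [hQ]
      rw [← Finset.sum_div, div_self hS.ne']
  have hGam : ∀ i, 0 < Real.Gamma (α i) := fun i => Real.Gamma_pos_of_pos (hα i)
  have hInt : ∀ i (k : ℕ), Integrable (fun ω => Q i ω ^ k) μ := by
    intro i k
    refine Integrable.of_bound ((hQm i).pow_const k).aestronglyMeasurable 1 ?_
    filter_upwards [hQ01] with ω hω
    rw [norm_pow]
    apply pow_le_one₀ (norm_nonneg _)
    rw [Real.norm_of_nonneg (hω.1 i).1]
    exact (hω.1 i).2
  have hE1 : ∀ i, ∫ ω, Q i ω ∂μ = α i / α₀ := by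
    intro i
    have h := aux_moment μ α hα G hGmeas hGindep hGlaw hpos i 0
    have hg : Real.Gamma (α i + (0 + 1 : ℕ)) / Real.Gamma (α i) = α i := by
      simp only [zero_add, Nat.cast_one]
      rw [Real.Gamma_add_one (hα i).ne']
      exact mul_div_cancel_right₀ _ (hGam i).ne'
    rw [hg, ← hα₀, aux_beta0 _ hα₀pos _ (hα i).le] at h
    rw [integral_eq_lintegral_of_nonneg_ae (by filter_upwards [hQ01] with ω hω using (hω.1 i).1)
      (hQm i).aestronglyMeasurable]
    simp only [zero_add, pow_one] at h
    rw [h, ENNReal.toReal_ofReal (div_nonneg (hα i).le hα₀pos.le)]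
  have hE2 : ∀ i, ∫ ω, Q i ω ^ 2 ∂μ = α i * (α i + 1) / (α₀ * (α₀ + 1)) := by
    intro i
    have hi := hα i
    have h := aux_moment μ α hα G hGmeas hGindep hGlaw hpos i 1
    have hg : Real.Gamma (α i + (1 + 1 : ℕ)) / Real.Gamma (α i) = α i * (α i + 1) := by
      rw [show α i + ((1 + 1 : ℕ) : ℝ) = (α i + 1) + 1 by push_cast; ring]
      rw [Real.Gamma_add_one (by positivity), Real.Gamma_add_one hi.ne']
      have := (hGam i).ne'
      field_simp
    rw [hg, ← hα₀, aux_beta1 _ hα₀pos _ (by positivity)] at h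
    rw [integral_eq_lintegral_of_nonneg_ae (by filter_upwards with ω using sq_nonneg _)
      ((hQm i).pow_const 2).aestronglyMeasurable]
    simp only [one_add_one_eq_two] at h
    rw [h, ENNReal.toReal_ofReal (by positivity)]
  have hps : ∑ i, p i = 1 := by
    simp only [hp]
    rw [← Finset.sum_div, ← hα₀, div_self hα₀pos.ne']
  have hp0 : ∀ i, 0 ≤ p i := fun i => by rw [hp]; exact div_nonneg (hα i).le hα₀pos.le
  have hp1 : ∀ i, p i ≤ 1 := fun i => by
    rw [← hps]; exact Finset.single_le_sum (f := fun j => p j) (fun j _ => hp0 j) (Finset.mem_univ i)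
  have hnp : ‖p‖ ^ 2 = ∑ i, p i ^ 2 := by
    rw [EuclideanSpace.norm_sq_eq]; simp
  have hsq : ∀ ω, ‖π ω - p‖ ^ 2 = ∑ i, (Q i ω ^ 2 - 2 * p i * Q i ω + p i ^ 2) := by
    intro ω
    rw [EuclideanSpace.norm_sq_eq]
    apply Finset.sum_congr rfl
    intro i _
    rw [Real.norm_eq_abs, sq_abs, PiLp.sub_apply, hπ]
    simp only [hQ]
    ring
  have hInt1 : ∀ i, Integrable (fun ω => Q i ω) μ := fun i => by simpa using hInt i 1
  have hIntT : ∀ i, Integrable (fun ω => Q i ω ^ 2 - 2 * p i * Q i ω + p i ^ 2) μ := fun i =>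
    ((hInt i 2).sub ((hInt1 i).const_mul (2 * p i))).add (integrable_const _)
  have hInt2 : Integrable (fun ω => ‖π ω - p‖ ^ 2) μ := by
    simp only [hsq]
    exact integrable_finsetSum _ (fun i _ => hIntT i)
  have hval : ∫ ω, ‖π ω - p‖ ^ 2 ∂μ = (1 - ‖p‖ ^ 2) / (α₀ + 1) := by
    simp only [hsq]
    rw [integral_finsetSum _ (fun i _ => hIntT i)]
    have : ∀ i, ∫ ω, (Q i ω ^ 2 - 2 * p i * Q i ω + p i ^ 2) ∂μ
        = (p i - p i ^ 2) / (α₀ + 1) := by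
      intro i
      rw [integral_add (f := fun ω => Q i ω ^ 2 - 2 * p i * Q i ω)
          ((hInt i 2).sub ((hInt1 i).const_mul (2 * p i))) (integrable_const _),
        integral_sub (hInt i 2) ((hInt1 i).const_mul (2 * p i)), integral_const_mul, hE1, hE2]
      simp only [integral_const, probReal_univ, smul_eq_mul, hp]
      field_simp
      ring
    simp only [this]
    rw [← Finset.sum_div, Finset.sum_sub_distrib, hps, hnp]
  calc ∫ ω, ‖π ω - p‖ ^ 3 ∂μ ≤ ∫ ω, 2 * ‖π ω - p‖ ^ 2 ∂μ := by
        apply integral_mono_of_nonneg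
        · filter_upwards with ω
          simp only [Pi.zero_apply]
          positivity
        · exact hInt2.const_mul 2
        · filter_upwards [hQ01] with ω hω
          have h4 : ‖π ω - p‖ ^ 2 ≤ 2 := by
            rw [hsq]
            calc _ ≤ ∑ i, (Q i ω + p i) := by
                  apply Finset.sum_le_sum
                  intro i _
                  have := hω.1 i
                  nlinarith [hp0 i, hp1 i, mul_nonneg (hp0 i) this.1]
              _ = 2 := by rw [Finset.sum_add_distrib, hω.2, hps]; norm_num
          have h2 : ‖π ω - p‖ ≤ 2 := by nlinarith [norm_nonneg (π ω - p)]
          rw [pow_succ']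
          exact mul_le_mul_of_nonneg_right h2 (sq_nonneg _)
    _ = 2 * (1 - ‖p‖ ^ 2) / (α₀ + 1) := by
        rw [integral_const_mul, hval]; ring
end

section
/- Let α ∈ ℝ_{>0}^K and let π be a Dirichlet(α)-distributed random vector. Then for every k ∈ {1,…,K}, 𝔼[log π_k] = ψ(α_k) − ψ(α₀), where α₀ = Σ_{j=1}^K α_j and ψ denotes the digamma function. -/
open MeasureTheory ProbabilityTheory

/-- The digamma function `ψ(t) = Γ'(t)/Γ(t)`, the logarithmic derivative of the
real Gamma function. -/
noncomputable def digamma (t : ℝ) : ℝ := deriv Real.Gamma t / Real.Gamma t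

open Set Filter Topology in
lemma gm_lt_top (a : ℝ) : ∀ᵐ x : ℝ, gammaPDF a 1 x < ⊤ :=
  ae_of_all _ fun x => by simp [gammaPDF]

lemma gm_meas (a : ℝ) : Measurable (gammaPDF a 1) :=
  (measurable_gammaPDFReal a 1).ennreal_ofReal

lemma gm_ind (a : ℝ) (ha : 0 < a) (f : ℝ → ℝ) :
    (fun x => (gammaPDF a 1 x).toReal • f x) =ᵐ[volume]
      (Set.Ioi (0:ℝ)).indicator
        (fun x => (1 / Real.Gamma a) * (x ^ (a - 1) * Real.exp (-x) * f x)) := by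
  have h0 : ∀ᵐ x : ℝ, x ≠ 0 := by
    simp [ae_iff]
  filter_upwards [h0] with x hx
  rw [gammaPDF, ENNReal.toReal_ofReal (gammaPDFReal_nonneg ha one_pos x), gammaPDFReal]
  by_cases h : 0 < x
  · rw [Set.indicator_of_mem (show x ∈ Set.Ioi 0 from h), if_pos h.le]
    simp; ring
  · rw [Set.indicator_of_notMem (by simpa using h), if_neg]
    · simp
    · intro h'; exact h (lt_of_le_of_ne h' (Ne.symm hx))

lemma gm_integral (a : ℝ) (ha : 0 < a) (f : ℝ → ℝ) :
    ∫ x, f x ∂(gammaMeasure a 1) =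
      (1 / Real.Gamma a) * ∫ x in Set.Ioi (0:ℝ), x ^ (a - 1) * Real.exp (-x) * f x := by
  rw [gammaMeasure, integral_withDensity_eq_integral_toReal_smul (gm_meas a) (gm_lt_top a),
    integral_congr_ae (gm_ind a ha f), integral_indicator measurableSet_Ioi, integral_const_mul]

lemma gm_integrable (a : ℝ) (ha : 0 < a) (f : ℝ → ℝ) :
    Integrable f (gammaMeasure a 1) ↔
      IntegrableOn (fun x => x ^ (a - 1) * Real.exp (-x) * f x) (Set.Ioi (0:ℝ)) := by
  rw [gammaMeasure, integrable_withDensity_iff_integrable_smul' (gm_meas a) (gm_lt_top a),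
    integrable_congr (gm_ind a ha f), integrable_indicator_iff measurableSet_Ioi, IntegrableOn,
    integrable_const_mul_iff]
  · rfl
  · exact (one_div_pos.2 (Real.Gamma_pos_of_pos ha)).ne'.isUnit

lemma gm_pos (a : ℝ) : ∀ᵐ x ∂(gammaMeasure a 1), 0 < x := by
  rw [gammaMeasure, ae_withDensity_iff (gm_meas a)]
  have h0 : ∀ᵐ x : ℝ, x ≠ 0 := by
    simp [ae_iff]
  filter_upwards [h0] with x hx h
  by_contra h'
  exact h (gammaPDF_of_neg (lt_of_le_of_ne (not_lt.1 h') hx))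

lemma gm_exp_integrable (a : ℝ) (ha : 0 < a) (t : ℝ) (ht : t < 1) :
    Integrable (fun x => Real.exp (t * x)) (gammaMeasure a 1) := by
  rw [gm_integrable a ha]
  have := integrableOn_rpow_mul_exp_neg_mul_rpow (p := 1) (s := a - 1) (b := 1 - t)
    (by linarith) one_pos (by linarith)
  refine this.congr_fun (fun x _ => ?_) measurableSet_Ioi
  simp only [Real.rpow_one, mul_assoc, ← Real.exp_add]
  congr 2; ring

lemma gm_exp_not_integrable (a : ℝ) (ha : 0 < a) (t : ℝ) (ht : 1 ≤ t) :
    ¬ Integrable (fun x => Real.exp (t * x)) (gammaMeasure a 1) := by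
  rw [gm_integrable a ha]
  intro h
  apply not_integrableOn_Ioi_rpow (a - 1)
  refine Integrable.mono' h (by fun_prop) ?_
  filter_upwards [ae_restrict_mem measurableSet_Ioi] with x hx
  have hx : 0 < x := hx
  have hp := Real.rpow_pos_of_pos hx (a - 1)
  rw [Real.norm_of_nonneg hp.le, mul_assoc, ← Real.exp_add]
  refine le_mul_of_one_le_right hp.le (Real.one_le_exp ?_)
  nlinarith

lemma gm_mgf (a : ℝ) (ha : 0 < a) (t : ℝ) :
    mgf id (gammaMeasure a 1) t = if t < 1 then (1 / (1 - t)) ^ a else 0 := by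
  split_ifs with ht
  · have h := Real.integral_rpow_mul_exp_neg_mul_Ioi ha (sub_pos.2 ht)
    simp only [mgf, id]
    rw [gm_integral a ha]
    have : ∫ x in Set.Ioi (0:ℝ), x ^ (a - 1) * Real.exp (-x) * Real.exp (t * x)
        = (1 / (1 - t)) ^ a * Real.Gamma a := by
      rw [← h]
      congr 1; ext x
      rw [mul_assoc, ← Real.exp_add]
      congr 2; ring
    rw [this]
    have := (Real.Gamma_pos_of_pos ha).ne'
    field_simp
  · exact integral_undef (gm_exp_not_integrable a ha t (not_lt.1 ht))

lemma gm_interior (a : ℝ) (ha : 0 < a) :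
    (0:ℝ) ∈ interior (integrableExpSet id (gammaMeasure a 1)) := by
  rw [mem_interior_iff_mem_nhds]
  filter_upwards [Iio_mem_nhds (zero_lt_one' ℝ)] with t ht
  exact gm_exp_integrable a ha t ht

lemma gm_sum {K : ℕ} (hK : 0 < K)
    {Ω : Type*} [MeasurableSpace Ω] (μ : Measure Ω) [IsProbabilityMeasure μ]
    (α : Fin K → ℝ) (hα : ∀ i, 0 < α i)
    (G : Fin K → Ω → ℝ) (hGmeas : ∀ i, Measurable (G i))
    (hGindep : iIndepFun G μ)
    (hGlaw : ∀ i, μ.map (G i) = gammaMeasure (α i) 1) :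
    μ.map (∑ i, G i) = gammaMeasure (∑ i, α i) 1 := by
  have : Nonempty (Fin K) := ⟨⟨0, hK⟩⟩
  have hs : 0 < ∑ i, α i := Finset.sum_pos (fun i _ => hα i) Finset.univ_nonempty
  have := isProbabilityMeasure_gammaMeasure hs one_pos
  have hm : Measurable (∑ i, G i) := by fun_prop
  have : IsProbabilityMeasure (μ.map (∑ i, G i)) := Measure.isProbabilityMeasure_map hm.aemeasurable
  have hmgf : mgf id (gammaMeasure (∑ i, α i) 1) = mgf id (μ.map (∑ i, G i)) := by
    ext t
    rw [mgf_id_map hm.aemeasurable, hGindep.mgf_sum hGmeas, gm_mgf _ hs]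
    simp_rw [← mgf_id_map (hGmeas _).aemeasurable, hGlaw, fun i => gm_mgf _ (hα i) t]
    split_ifs with ht
    · exact Real.rpow_sum_of_pos (one_div_pos.2 (sub_pos.2 ht)) _ _
    · simp [hK.ne']
  have h := eqOn_complexMGF_of_mgf hmgf
  refine (Measure.ext_of_charFun ?_).symm
  ext t
  rw [← complexMGF_id_mul_I, ← complexMGF_id_mul_I]
  apply h
  simpa using gm_interior _ hs

lemma gm_log_exp (a : ℝ) (t : ℝ) :
    (fun x => Real.exp (t * Real.log x)) =ᵐ[gammaMeasure a 1] fun x => x ^ t := by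
  filter_upwards [gm_pos a] with x hx
  rw [Real.rpow_def_of_pos hx, mul_comm]

lemma gm_log_interior (a : ℝ) (ha : 0 < a) :
    (0:ℝ) ∈ interior (integrableExpSet Real.log (gammaMeasure a 1)) := by
  rw [mem_interior_iff_mem_nhds]
  filter_upwards [Ioi_mem_nhds (neg_lt_zero.2 ha)] with t ht
  have ht : -a < t := ht
  change Integrable _ _
  rw [integrable_congr (gm_log_exp a t), gm_integrable a ha]
  refine (Real.GammaIntegral_convergent (s := a + t) (by linarith)).congr_fun
    (fun x hx => ?_) measurableSet_Ioi
  have hx : 0 < x := hx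
  simp only
  rw [show a + t - 1 = (a - 1) + t by ring, Real.rpow_add hx]; ring

lemma gm_log_mgf (a : ℝ) (ha : 0 < a) (t : ℝ) (ht : -a < t) :
    mgf Real.log (gammaMeasure a 1) t = Real.Gamma (a + t) / Real.Gamma a := by
  rw [mgf, integral_congr_ae (gm_log_exp a t), gm_integral a ha,
    Real.Gamma_eq_integral (s := a + t) (by linarith), one_div, div_eq_inv_mul]
  congr 1
  refine setIntegral_congr_fun measurableSet_Ioi (fun x hx => ?_)
  have hx : 0 < x := hx
  try simp only
  rw [show a + t - 1 = (a - 1) + t by ring, Real.rpow_add hx]; ring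

lemma gm_log_integral (a : ℝ) (ha : 0 < a) :
    ∫ x, Real.log x ∂(gammaMeasure a 1) = digamma a := by
  rw [← deriv_mgf_zero (gm_log_interior a ha)]
  have : mgf Real.log (gammaMeasure a 1) =ᶠ[nhds 0] fun t => Real.Gamma (a + t) / Real.Gamma a := by
    filter_upwards [Ioi_mem_nhds (neg_lt_zero.2 ha)] with t ht
    exact gm_log_mgf a ha t ht
  rw [this.deriv_eq, deriv_div_const, deriv_comp_const_add, add_zero, digamma]

/-- **Dirichlet logarithmic moment.**
Let `π` be a Dirichlet(α)-distributed random vector, realized as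
`π_i = G_i / (G_1 + ⋯ + G_K)` where the `G_i` are independent Gamma(α_i, 1)
random variables.  Then `𝔼[log π_k] = ψ(α_k) − ψ(α₀)` where `α₀ = Σ_j α_j` and
`ψ` is the digamma function. -/
theorem dirichlet_log_moment {K : ℕ} (hK : 0 < K)
    {Ω : Type*} [MeasurableSpace Ω] (μ : Measure Ω) [IsProbabilityMeasure μ]
    (α : Fin K → ℝ) (hα : ∀ i, 0 < α i)
    (G : Fin K → Ω → ℝ) (hGmeas : ∀ i, Measurable (G i))
    (hGindep : iIndepFun G μ)
    (hGlaw : ∀ i, μ.map (G i) = gammaMeasure (α i) 1)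
    (π : Ω → EuclideanSpace ℝ (Fin K))
    (hπ : ∀ ω i, π ω i = G i ω / ∑ j, G j ω)
    (k : Fin K) :
    ∫ ω, Real.log (π ω k) ∂μ = digamma (α k) - digamma (∑ j, α j) := by
  have : Nonempty (Fin K) := ⟨⟨0, hK⟩⟩
  have hs : 0 < ∑ i, α i := Finset.sum_pos (fun i _ => hα i) Finset.univ_nonempty
  have hsum := gm_sum hK μ α hα G hGmeas hGindep hGlaw
  have hm : Measurable (∑ i, G i) := by fun_prop
  have key : ∀ (X : Ω → ℝ) (a : ℝ), Measurable X → 0 < a → μ.map X = gammaMeasure a 1 →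
      Integrable (fun ω => Real.log (X ω)) μ ∧ ∫ ω, Real.log (X ω) ∂μ = digamma a := by
    intro X a hX ha hl
    constructor
    · have := integrable_of_mem_interior_integrableExpSet (gm_log_interior a ha)
      rw [← hl] at this
      exact this.comp_measurable hX
    · rw [← gm_log_integral a ha, ← hl,
        integral_map hX.aemeasurable Real.measurable_log.aestronglyMeasurable]
  have hpos : ∀ᵐ ω ∂μ, ∀ i, 0 < G i ω := by
    rw [ae_all_iff]
    intro i
    have := gm_pos (α i)
    rw [← hGlaw i] at this
    exact ae_of_ae_map (hGmeas i).aemeasurable this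
  obtain ⟨h1, h2⟩ := key (G k) (α k) (hGmeas k) (hα k) (hGlaw k)
  obtain ⟨h3, h4⟩ := key _ _ hm hs hsum
  rw [← h2, ← h4, ← integral_sub h1 h3]
  refine integral_congr_ae ?_
  filter_upwards [hpos] with ω hω
  rw [hπ, Real.log_div (hω k).ne', Finset.sum_apply]
  exact (Finset.sum_pos (fun i _ => hω i) Finset.univ_nonempty).ne'
end

section
/- Let α ∈ ℝ_{>0}^K, α₀ = Σ_{j=1}^K α_j, and fix y ∈ {1,…,K} with p_y = α_y/α₀. Define Δ_CE(α, y) = (ψ(α₀) − log α₀) − (ψ(α_y) − log α_y), where ψ is the digamma function. If p_y ≥ δ for some δ > 0, then |Δ_CE(α, y)| ≤ (1 + δ⁻¹)/α₀. -/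
theorem hasDerivAt_logGamma_aux {x : ℝ} (hx : 0 < x) :
    HasDerivAt (Real.log ∘ Real.Gamma) (digamma x) x := by
  have hd : DifferentiableAt ℝ Real.Gamma x := by
    apply Real.differentiableAt_Gamma
    intro m
    have : (0 : ℝ) ≤ m := Nat.cast_nonneg m
    linarith
  exact hd.hasDerivAt.log (Real.Gamma_pos_of_pos hx).ne'

theorem logGamma_add_one_aux {x : ℝ} (hx : 0 < x) :
    (Real.log ∘ Real.Gamma) (x + 1) = (Real.log ∘ Real.Gamma) x + Real.log x := by
  simp only [Function.comp]
  rw [Real.Gamma_add_one hx.ne', Real.log_mul hx.ne' (Real.Gamma_pos_of_pos hx).ne', add_comm]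

theorem digamma_le_log_aux {x : ℝ} (hx : 0 < x) : digamma x ≤ Real.log x := by
  have h := Real.convexOn_log_Gamma.le_slope_of_hasDerivAt (x := x) (y := x + 1)
    (Set.mem_Ioi.2 hx) (Set.mem_Ioi.2 (by linarith)) (by linarith) (hasDerivAt_logGamma_aux hx)
  rw [slope_def_field, logGamma_add_one_aux hx] at h
  simpa using h

theorem log_le_digamma_aux {x : ℝ} (hx : 0 < x) : Real.log x ≤ digamma x + x⁻¹ := by
  have hx1 : 0 < x + 1 := by linarith
  have h := Real.convexOn_log_Gamma.slope_le_of_hasDerivAt (x := x) (y := x + 1)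
    (Set.mem_Ioi.2 hx) (Set.mem_Ioi.2 hx1) (by linarith) (hasDerivAt_logGamma_aux hx1)
  rw [slope_def_field, logGamma_add_one_aux hx] at h
  have h1 : HasDerivAt (fun t => (Real.log ∘ Real.Gamma) (t + 1)) (digamma (x + 1)) x :=
    (hasDerivAt_logGamma_aux hx1).comp_add_const x 1
  have h2 : HasDerivAt (fun t => (Real.log ∘ Real.Gamma) t + Real.log t)
      (digamma x + x⁻¹) x :=
    (hasDerivAt_logGamma_aux hx).add (Real.hasDerivAt_log hx.ne')
  have h3 := h1.congr_of_eventuallyEq (f₁ := fun t => (Real.log ∘ Real.Gamma) t + Real.log t) (by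
    filter_upwards [lt_mem_nhds hx] with t ht
    exact (logGamma_add_one_aux ht).symm)
  rw [← h3.unique h2]
  simpa using h

/-- **Bound on the cross-entropy plug-in correction.**
With `α₀ = Σ_j α_j`, `p_y = α_y/α₀` and
`Δ_CE(α, y) = (ψ(α₀) − log α₀) − (ψ(α_y) − log α_y)`, if `p_y ≥ δ > 0` then
`|Δ_CE(α, y)| ≤ (1 + δ⁻¹)/α₀`. -/
theorem abs_ce_plugin_correction_le {K : ℕ}
    (α : Fin K → ℝ) (hα : ∀ i, 0 < α i)
    (α₀ : ℝ) (hα₀ : α₀ = ∑ j, α j)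
    (y : Fin K)
    (pY : ℝ) (hpY : pY = α y / α₀)
    (δ : ℝ) (hδ : 0 < δ) (hpYδ : δ ≤ pY) :
    |(digamma α₀ - Real.log α₀) - (digamma (α y) - Real.log (α y))| ≤
      (1 + δ⁻¹) / α₀ := by
  have hy := hα y
  have h0 : 0 < α₀ := by
    rw [hα₀]
    exact Finset.sum_pos (fun i _ => hα i) ⟨y, Finset.mem_univ y⟩
  have a1 := digamma_le_log_aux h0
  have a2 := log_le_digamma_aux h0
  have b1 := digamma_le_log_aux hy
  have b2 := log_le_digamma_aux hy
  have h4 : (α y)⁻¹ ≤ δ⁻¹ * α₀⁻¹ := by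
    rw [← mul_inv]
    apply inv_anti₀ (by positivity)
    rw [hpY, le_div_iff₀ h0] at hpYδ
    exact hpYδ
  have h5 : (1 + δ⁻¹) / α₀ = α₀⁻¹ + δ⁻¹ * α₀⁻¹ := by
    rw [div_eq_mul_inv]
    ring
  have h6 : 0 < α₀⁻¹ := by positivity
  have h7 : 0 < (α y)⁻¹ := by positivity
  rw [h5, abs_le]
  constructor <;> linarith
end
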